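/- Suppose σ ≥ 2 L_H, δ_g ≤ 9 δ_H² / (4σ), |f1 - f0 - ⟨g, η⟩ - (1/2)⟨A η, η⟩| ≤ (L_H/2)‖η‖³, ‖G - g‖ ≤ δ_g, and ‖(H - A) η‖ ≤ δ_H ‖η‖. Let ζ ∈ E satisfy ‖ζ‖ ≥ 9 δ_H / σ, and assume that either ‖η‖ ≤ ‖ζ‖ or ‖η‖ ≥ 9 δ_H / σ. Then f1 - f0 - m(η) ≤ (3/4) δ_H ‖ζ‖². (Estimates (13)–(15) and (16)–(18) in the proof of Lemma 3.3.) -/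

import Mathlib

open RealInnerProductSpace

/-!
Let `r = 9 * δ_H / σ` and `t = ‖η‖`. Cauchy–Schwarz bounds the contributions of the inexact gradient
and Hessian by `δ_g * t` and `δ_H / 2 * t ^ 2`, while the cubic term of the model outweighs the
Taylor remainder by at least `σ / 12 * t ^ 3`. Since `δ_H = σ * r / 9` and `δ_g ≤ σ * r ^ 2 / 36`,
the error is at most `σ / 36 * (r ^ 2 * t + 2 * r * t ^ 2 - 3 * t ^ 3)`. Weighted squares
bound the parenthesis by `r ^ 3`, so the error is at most `δ_H * r ^ 2 / 4` whatever the size of the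
step, and `r ≤ ‖ζ‖`.
-/

section CubicModel

variable {E : Type*} [SeminormedAddCommGroup E] [InnerProductSpace ℝ E]

/-- The cubic-regularized quadratic model with gradient `G`, Hessian `H` and regularization
parameter `σ`, as a function of the step. It omits the constant term, so it models the change
`f1 - f0` of the objective. -/
noncomputable def cubicModel (G : E) (H : E →ₗ[ℝ] E) (σ : ℝ) (ξ : E) : ℝ :=
  ⟪G, ξ⟫ + (1 / 2) * ⟪H ξ, ξ⟫ + (σ / 3) * ‖ξ‖ ^ 3

theorem sub_cubicModel_le {G g η : E} {H A : E →ₗ[ℝ] E} {σ L δ_g δ_H f0 f1 : ℝ}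
    (hTaylor : f1 - f0 - ⟪g, η⟫ - (1 / 2) * ⟪A η, η⟫ ≤ (L / 2) * ‖η‖ ^ 3)
    (hG : ‖G - g‖ ≤ δ_g) (hH : ‖(H - A) η‖ ≤ δ_H * ‖η‖) :
    f1 - f0 - cubicModel G H σ η ≤
      δ_g * ‖η‖ + (δ_H / 2) * ‖η‖ ^ 2 + (L / 2 - σ / 3) * ‖η‖ ^ 3 := by
  have gradient_error : ⟪g, η⟫ - ⟪G, η⟫ ≤ δ_g * ‖η‖ := by
    rw [norm_sub_rev] at hG
    rw [← inner_sub_left]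
    exact (real_inner_le_norm _ _).trans (by gcongr)
  have hessian_error : ⟪A η, η⟫ - ⟪H η, η⟫ ≤ δ_H * ‖η‖ * ‖η‖ := by
    rw [LinearMap.sub_apply, norm_sub_rev] at hH
    rw [← inner_sub_left]
    exact (real_inner_le_norm _ _).trans (by gcongr)
  rw [cubicModel]
  linarith

theorem sq_mul_add_two_mul_mul_sq_le {r t : ℝ} (hr : 0 ≤ r) (ht : 0 ≤ t) :
    r ^ 2 * t + 2 * r * t ^ 2 ≤ r ^ 3 + 3 * t ^ 3 := by
  have sum_nonneg : 0 ≤ r * (r - t) ^ 2 + t * (r - 3 / 2 * t) ^ 2 + 3 / 4 * t ^ 3 := by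
    positivity
  linarith

theorem model_error_bound_by_reference_step_general {G g η : E} {H A : E →ₗ[ℝ] E}
    {σ L δ_g δ_H f0 f1 : ℝ} (hσ : 0 < σ) (hδH : 0 ≤ δ_H) (hL : 2 * L ≤ σ)
    (hδg : δ_g ≤ 9 * δ_H ^ 2 / (4 * σ))
    (hTaylor : f1 - f0 - ⟪g, η⟫ - (1 / 2) * ⟪A η, η⟫ ≤ (L / 2) * ‖η‖ ^ 3)
    (hG : ‖G - g‖ ≤ δ_g) (hH : ‖(H - A) η‖ ≤ δ_H * ‖η‖) :
    f1 - f0 - cubicModel G H σ η ≤ (1 / 4) * δ_H * (9 * δ_H / σ) ^ 2 := by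
  set r := 9 * δ_H / σ with hr
  have hr0 : 0 ≤ r := by positivity
  have hδH_eq : δ_H = σ * r / 9 := by rw [hr]; field_simp
  have hδg_le : δ_g ≤ σ * r ^ 2 / 36 := hδg.trans_eq (by rw [hr]; field_simp; ring)
  calc f1 - f0 - cubicModel G H σ η
      ≤ δ_g * ‖η‖ + (δ_H / 2) * ‖η‖ ^ 2 + (L / 2 - σ / 3) * ‖η‖ ^ 3 :=
        sub_cubicModel_le hTaylor hG hH
    _ ≤ (σ * r ^ 2 / 36) * ‖η‖ + (δ_H / 2) * ‖η‖ ^ 2 + (-σ / 12) * ‖η‖ ^ 3 := by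
        gcongr
        linarith
    _ = (σ / 36) * (r ^ 2 * ‖η‖ + 2 * r * ‖η‖ ^ 2 - 3 * ‖η‖ ^ 3) := by rw [hδH_eq]; ring
    _ ≤ (σ / 36) * r ^ 3 := by
        gcongr
        linarith [sq_mul_add_two_mul_mul_sq_le hr0 (norm_nonneg η)]
    _ = (1 / 4) * δ_H * r ^ 2 := by rw [hδH_eq]; ring

end CubicModel

/-- Estimates (13)–(15) and (16)–(18) in the proof of Lemma 3.3. -/
theorem model_error_bound_by_reference_step
    {E : Type*} [NormedAddCommGroup E] [InnerProductSpace ℝ E] [FiniteDimensional ℝ E]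
    (G g η ζ : E) (H A : E →L[ℝ] E) (hH : IsSelfAdjoint H) (hA : IsSelfAdjoint A)
    (σ L_H δ_g δ_H : ℝ) (hσ : 0 < σ) (hL : 0 < L_H)
    (hδg : δ_g ∈ Set.Ioo (0 : ℝ) 1) (hδH : δ_H ∈ Set.Ioo (0 : ℝ) 1)
    (m : E → ℝ)
    (hm : ∀ ξ : E, m ξ = ⟪G, ξ⟫ + (1 / 2) * ⟪H ξ, ξ⟫ + (σ / 3) * ‖ξ‖ ^ 3)
    (f0 f1 : ℝ)
    (hσL : σ ≥ 2 * L_H)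
    (hδgH : δ_g ≤ 9 * δ_H ^ 2 / (4 * σ))
    (hTaylor : |f1 - f0 - ⟪g, η⟫ - (1 / 2) * ⟪A η, η⟫| ≤ (L_H / 2) * ‖η‖ ^ 3)
    (hG : ‖G - g‖ ≤ δ_g)
    (hHa : ‖(H - A) η‖ ≤ δ_H * ‖η‖)
    (hζ : ‖ζ‖ ≥ 9 * δ_H / σ)
    (hcase : ‖η‖ ≤ ‖ζ‖ ∨ ‖η‖ ≥ 9 * δ_H / σ) :
    f1 - f0 - m η ≤ (3 / 4) * δ_H * ‖ζ‖ ^ 2 := by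
  obtain rfl : m = cubicModel G (H : E →ₗ[ℝ] E) σ := funext hm
  have hδH_pos : 0 < δ_H := hδH.1
  calc f1 - f0 - cubicModel G (H : E →ₗ[ℝ] E) σ η
      ≤ (1 / 4) * δ_H * (9 * δ_H / σ) ^ 2 :=
        model_error_bound_by_reference_step_general (A := A) hσ hδH_pos.le hσL hδgH
          (le_of_abs_le hTaylor) hG hHa
    _ ≤ (3 / 4) * δ_H * ‖ζ‖ ^ 2 := by
        gcongr
        norm_num
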